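/- Let F be a field such that there exists a ring homomorphism from ℝ to F or from the p-adic numbers ℚ_p to F for some prime p, let n ≥ 2 be an integer, and let w₁ ∈ F_{d₁}, w₂ ∈ F_{d₂}, w₃ ∈ F_{d₃} be nontrivial words. Then every element of SL_n(F) is a product g₁g₂g₃ with g₁ ∈ w₁(SL_n(F)), g₂ ∈ w₂(SL_n(F)), and g₃ ∈ w₃(SL_n(F)). -/

import Mathlib

/-- The set of `w`-values in the group `G`: the image of the word map `w : G^d → G`. -/
def wordValues {d : ℕ} (w : FreeGroup (Fin d)) (G : Type*) [Group G] : Set G :=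
  Set.range fun g : Fin d → G => FreeGroup.lift g w

/-!
Let `K` be `ℝ`, `ℚ_p` or any other complete nontrivially normed field mapping to `F`. Evaluate a
nontrivial word at hyperbolic elements of `SL₂(K)` with eigenvalues `t`, `t⁻¹` whose eigenlines are
all distinct. As `t → ∞` the trace grows like a power of `t`: up to conjugacy the word is cyclically
reduced, so in the product of rank-one projections that gives the leading coefficient no image lies
in the next kernel. By the inverse function theorem every large trace is of the form `u + u⁻¹`;
hence the word has values in `SL₂(K)` with distinct eigenvalues in `K` outside any finite set.
Block sums of such values have `n` distinct eigenvalues in `F`, and then every matrix with the same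
characteristic polynomial is a value as well.

Sourour's theorem factors a nonscalar invertible matrix as a product of two matrices with arbitrary
prescribed eigenvalues, subject only to the determinant condition. This writes each noncentral
element of `SL_n(F)` as a product of values of two given words, and a value of the third word serves
to move a central element off the center.
-/

namespace SLWaring

open Polynomial Matrix Bornology Filter Topology

section Conjugacy

variable {R ι : Type*} [CommRing R] [Fintype ι] [DecidableEq ι] {M N : Matrix ι ι R}

lemma trace_eq_of_isConj (hMN : IsConj M N) : M.trace = N.trace := by
  obtain ⟨P, hP⟩ := hMN
  rw [(Units.eq_mul_inv_iff_mul_eq P).2 hP.eq.symm, trace_units_conj]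

lemma det_eq_of_isConj (hMN : IsConj M N) : M.det = N.det := by
  obtain ⟨P, hP⟩ := hMN
  rw [(Units.eq_mul_inv_iff_mul_eq P).2 hP.eq.symm, det_units_conj]

end Conjugacy

section RankOne

variable {R ι α : Type*} [CommRing R] [IsDomain R] [Fintype ι] {u v : α → ι → R}

lemma exists_prod_map_vecMulVec_eq_smul [DecidableEq ι] (a : α) (L : List α)
    (hL : (a :: L).IsChain fun b c => v b ⬝ᵥ u c ≠ 0) :
    ∃ κ : R, κ ≠ 0 ∧ ((a :: L).map fun b => vecMulVec (u b) (v b)).prod =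
      κ • vecMulVec (u a) (v ((a :: L).getLast (List.cons_ne_nil a L))) := by
  induction L generalizing a with
  | nil => exact ⟨1, one_ne_zero, by simp⟩
  | cons b L ih =>
    obtain ⟨hab, hbL⟩ := List.isChain_cons_cons.1 hL
    obtain ⟨κ, hκ, hprod⟩ := ih b hbL
    refine ⟨κ * (v a ⬝ᵥ u b), mul_ne_zero hκ hab, ?_⟩
    rw [List.map_cons, List.prod_cons, hprod, mul_smul_comm, vecMulVec_mul_vecMulVec,
      vecMulVec_smul, smul_smul, List.getLast_cons (List.cons_ne_nil b L)]

lemma trace_prod_map_vecMulVec_ne_zero [DecidableEq ι] {L : List α}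
    (hL : L.IsChain fun b c => v b ⬝ᵥ u c ≠ 0) (hne : L ≠ [])
    (hcyc : v (L.getLast hne) ⬝ᵥ u (L.head hne) ≠ 0) :
    (L.map fun b => vecMulVec (u b) (v b)).prod.trace ≠ 0 := by
  obtain ⟨a, L, rfl⟩ := List.exists_cons_of_ne_nil hne
  obtain ⟨κ, hκ, hprod⟩ := exists_prod_map_vecMulVec_eq_smul a L hL
  rw [hprod, trace_smul, trace_vecMulVec, dotProduct_comm]
  exact mul_ne_zero hκ hcyc

end RankOne

section Hyperbolic

variable {K : Type*} [Field K]

/-- The projection of `K²` onto the line through `(1, p)` along the line through `(1, q)`, as a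
rank-one matrix; it is meant for `p ≠ q` only, being the junk value `0` when `p = q`. -/
def lineProj (p q : K) : Matrix (Fin 2) (Fin 2) K :=
  vecMulVec ((p - q)⁻¹ • ![1, p]) ![-q, 1]

/-- The element of `SL₂(K)` with eigenvalue `t` on the line through `(1, p)` and `t⁻¹` on the line
through `(1, q)`. -/
def hyperbolic {p q : K} (hpq : p ≠ q) (t : Kˣ) : Matrix.SpecialLinearGroup (Fin 2) K :=
  ⟨(t : K) • lineProj p q + (t : K)⁻¹ • lineProj q p, by
    have := sub_ne_zero.2 hpq
    have := sub_ne_zero.2 hpq.symm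
    have := t.ne_zero
    simp only [lineProj, det_fin_two, Matrix.add_apply, Matrix.smul_apply, vecMulVec_apply,
      Pi.smul_apply, cons_val_zero, cons_val_one, smul_eq_mul]
    field_simp
    ring⟩

lemma hyperbolic_inv {p q : K} (hpq : p ≠ q) (t : Kˣ) :
    (hyperbolic hpq t)⁻¹ = hyperbolic hpq.symm t := by
  have := sub_ne_zero.2 hpq
  have := sub_ne_zero.2 hpq.symm
  have := t.ne_zero
  ext i j
  rw [Matrix.SpecialLinearGroup.coe_inv, adjugate_fin_two]
  fin_cases i <;> fin_cases j <;> simp [hyperbolic, lineProj] <;> field_simp <;>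
    ring

lemma coe_hyperbolic {p q : K} (hpq : p ≠ q) (t : Kˣ) :
    (hyperbolic hpq t : Matrix (Fin 2) (Fin 2) K) =
      (t : K) • (lineProj p q + (t : K)⁻¹ ^ 2 • lineProj q p) := by
  have ht : (t : K) * (t : K)⁻¹ ^ 2 = (t : K)⁻¹ := by
    have := t.ne_zero
    field_simp
  rw [smul_add, smul_smul, ht]
  rfl

end Hyperbolic

section PingPong

variable {K α : Type*} [Field K] {c : α × Bool → K}

variable (c) in
/-- The linear pencil in `s` that, at `s = t⁻²` and up to the scalar `t`, is the matrix of the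
letter `a` (or `a⁻¹`) when the letters act hyperbolically with attracting lines given by `c`. -/
def letterPencil (s : K) (a : α × Bool) : Matrix (Fin 2) (Fin 2) K :=
  lineProj (c a) (c (a.1, !a.2)) + s • lineProj (c (a.1, !a.2)) (c a)

lemma coe_lift_mk_hyperbolic (hc : ∀ i, c (i, true) ≠ c (i, false)) (t : Kˣ)
    (L : List (α × Bool)) :
    (FreeGroup.lift (fun i => hyperbolic (hc i) t) (FreeGroup.mk L) :
      Matrix.SpecialLinearGroup (Fin 2) K).1 =
      (t : K) ^ L.length • (L.map (letterPencil c ((t : K)⁻¹ ^ 2))).prod := by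
  rw [FreeGroup.lift_mk]
  induction L with
  | nil => simp
  | cons a L ih =>
    rw [List.map_cons, List.prod_cons, List.map_cons, List.prod_cons, List.length_cons, pow_succ',
      ← smul_mul_smul_comm, ← ih, Matrix.SpecialLinearGroup.coe_mul]
    congr 1
    rcases a with ⟨i, _ | _⟩
    · rw [cond_false, hyperbolic_inv, coe_hyperbolic]; rfl
    · rw [cond_true, coe_hyperbolic]; rfl

lemma trace_prod_map_letterPencil_zero_ne_zero (hc : Function.Injective c) {L : List (α × Bool)}
    (hL : FreeGroup.IsCyclicallyReduced L) (hne : L ≠ []) :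
    (L.map (letterPencil c 0)).prod.trace ≠ 0 := by
  have pairing_ne_zero : ∀ a b : α × Bool, (a.1 = b.1 → a.2 = b.2) →
      (![-c (a.1, !a.2), 1] : Fin 2 → K) ⬝ᵥ ((c b - c (b.1, !b.2))⁻¹ • ![1, c b]) ≠ 0 := by
    intro a b hab
    have hb : c b ≠ c (b.1, !b.2) := fun h => by simpa using congrArg Prod.snd (hc h)
    have hba : c b ≠ c (a.1, !a.2) := fun h => by
      have := hc h
      grind
    rw [dotProduct_smul, smul_eq_mul]
    refine mul_ne_zero (inv_ne_zero (sub_ne_zero.2 hb)) ?_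
    simpa [neg_add_eq_sub] using sub_ne_zero.2 hba
  have hpencil : letterPencil c 0 = fun b => lineProj (c b) (c (b.1, !b.2)) := by
    ext1 b
    simp only [letterPencil, zero_smul, add_zero]
  rw [hpencil]
  refine trace_prod_map_vecMulVec_ne_zero (hL.isReduced.imp fun _ _ => pairing_ne_zero _ _) hne ?_
  exact pairing_ne_zero _ _ (hL.2 _ (List.getLast_mem_getLast? hne) _ (List.head_mem_head? hne))

end PingPong

lemma exists_isCyclicallyReduced_isConj {α : Type*} {w : FreeGroup α} (hw : w ≠ 1) :
    ∃ L : List (α × Bool), FreeGroup.IsCyclicallyReduced L ∧ L ≠ [] ∧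
      IsConj (FreeGroup.mk L) w := by
  classical
  set L := FreeGroup.reduceCyclically w.toWord
  set u := FreeGroup.mk (FreeGroup.reduceCyclically.conjugator w.toWord)
  have hconj : u * FreeGroup.mk L * u⁻¹ = w := by
    rw [FreeGroup.inv_mk, FreeGroup.mul_mk, FreeGroup.mul_mk,
      FreeGroup.reduceCyclically.conj_conjugator_reduceCyclically, FreeGroup.mk_toWord]
  refine ⟨L, FreeGroup.reduceCyclically.isCyclicallyReduced FreeGroup.isReduced_toWord, ?_,
    isConj_iff.2 ⟨u, hconj⟩⟩
  intro hL
  refine hw ?_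
  rw [← hconj, hL, ← FreeGroup.one_eq_mk, mul_one, mul_inv_cancel]

section NormedField

variable {K : Type*} [NontriviallyNormedField K]

variable (K) in
lemma tendsto_inv_sq_cobounded : Tendsto (fun t : K => t⁻¹ ^ 2) (cobounded K) (𝓝 0) := by
  simpa using (tendsto_inv₀_cobounded (α := K)).pow 2

lemma tendsto_pow_mul_comp_inv_sq_cobounded {f : K → K} (hf : Continuous f) (hf0 : f 0 ≠ 0) {m : ℕ}
    (hm : m ≠ 0) :
    Tendsto (fun t => t ^ m * f (t⁻¹ ^ 2)) (cobounded K) (cobounded K) := by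
  rw [← tendsto_norm_atTop_iff_cobounded]
  have hnorm : Tendsto (fun t : K => ‖f (t⁻¹ ^ 2)‖) (cobounded K) (𝓝 ‖f 0‖) :=
    ((hf.tendsto 0).comp (tendsto_inv_sq_cobounded K)).norm
  simp_rw [norm_mul, norm_pow]
  exact ((tendsto_pow_atTop hm).comp tendsto_norm_cobounded_atTop).atTop_mul_pos
    (norm_pos_iff.2 hf0) hnorm

lemma frequently_cobounded_trace_wordValues {d : ℕ} {w : FreeGroup (Fin d)} (hw : w ≠ 1) :
    ∃ᶠ τ in cobounded K, ∃ g ∈ wordValues w (Matrix.SpecialLinearGroup (Fin 2) K),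
      (g : Matrix (Fin 2) (Fin 2) K).trace = τ := by
  obtain ⟨L, hL, hne, hLw⟩ := exists_isCyclicallyReduced_isConj hw
  have : Infinite K := NontriviallyNormedField.infinite K
  let c := (Encodable.encode' (Fin d × Bool)).trans (Infinite.natEmbedding K)
  have hc : ∀ i, c (i, true) ≠ c (i, false) := fun i => c.injective.ne (by simp)
  have hcont : Continuous fun s => (L.map (letterPencil c s)).prod.trace := by
    unfold letterPencil
    fun_prop
  refine (tendsto_pow_mul_comp_inv_sq_cobounded hcont
    (trace_prod_map_letterPencil_zero_ne_zero c.injective hL hne)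
    (mt List.length_eq_zero_iff.1 hne)).frequently (Eventually.frequently ?_)
  filter_upwards [eventually_ne_cobounded 0] with t ht
  refine ⟨_, ⟨fun i => hyperbolic (hc i) (Units.mk0 t ht), rfl⟩, ?_⟩
  have hconj := (Matrix.SpecialLinearGroup.coeMonoidHom.comp
    (FreeGroup.lift fun i => hyperbolic (hc i) (Units.mk0 t ht))).map_isConj hLw
  refine (trace_eq_of_isConj hconj).symm.trans ?_
  simp only [MonoidHom.comp_apply, Matrix.SpecialLinearGroup.coeMonoidHom_apply,
    coe_lift_mk_hyperbolic, trace_smul, smul_eq_mul, Units.val_mk0]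

lemma eventually_cobounded_exists_units_add_inv_eq [CompleteSpace K] :
    ∀ᶠ τ in cobounded K, ∃ u : Kˣ, (u : K) + (u⁻¹ : Kˣ) = τ := by
  have hderiv : HasStrictDerivAt (fun z : K => z - z ^ 2) 1 0 := by
    simpa using (hasStrictDerivAt_id (0 : K)).fun_sub (hasStrictDerivAt_pow 2 (0 : K))
  have hsurj : ∀ᶠ a in 𝓝 (0 : K), ∃ z, z - z ^ 2 = a := by
    have := hderiv.map_nhds_eq one_ne_zero
    simp only [ne_eq, OfNat.ofNat_ne_zero, not_false_eq_true, zero_pow, sub_zero] at this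
    rw [← this, eventually_map]
    exact Eventually.of_forall fun z => ⟨z, rfl⟩
  filter_upwards [(tendsto_inv_sq_cobounded K).eventually hsurj, eventually_ne_cobounded 0]
    with τ ⟨z, hz⟩ hτ
  have hmul : τ * z * (τ * (1 - z)) = 1 := by
    calc τ * z * (τ * (1 - z)) = τ ^ 2 * (z - z ^ 2) := by ring
      _ = 1 := by rw [hz]; field_simp
  exact ⟨⟨_, _, hmul, (mul_comm _ _).trans hmul⟩, by rw [Units.inv_mk]; ring⟩

end NormedField

section Basis

variable {F V : Type*} [Field F] [AddCommGroup V] [Module F V]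

lemma exists_basis_extension_of_card_eq {ι : Type*} [Fintype ι] [FiniteDimensional F V]
    (hι : Module.finrank F V = Fintype.card ι) {v : ι → V} {s : Set ι} (hv : LinearIndepOn F v s) :
    ∃ b : Module.Basis ι F V, ∀ i ∈ s, b i = v i := by
  let b := Module.Basis.extend hv.id_image
  have := FiniteDimensional.fintypeBasisIndex b
  have hcard : Fintype.card ι = (hv.id_image.extend (Set.subset_univ _)).toFinset.card := by
    rw [← hι, Set.toFinset_card, Module.finrank_eq_card_basis b]
  have hmaps : s.MapsTo v ((hv.id_image.extend (Set.subset_univ _)).toFinset : Set V) := by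
    rw [Set.coe_toFinset]
    exact (s.mapsTo_image v).mono_right (hv.id_image.subset_extend _)
  obtain ⟨σ, hσ⟩ := hmaps.exists_equiv_extend_of_card_eq hcard hv.injOn
  refine ⟨b.reindex (σ.trans (Equiv.subtypeEquivRight fun _ => Set.mem_toFinset)).symm, ?_⟩
  intro i hi
  simp [b, hσ i hi]

lemma exists_linearIndependent_pair_sub_smul {f : Module.End F V} (hf : ∀ a : F, f ≠ a • 1)
    (h : F) : ∃ v, LinearIndependent F ![v, f v - h • v] := by
  by_contra! hdep
  obtain ⟨a, ha⟩ := (f - h • (1 : Module.End F V)).exists_eq_smul_id_of_forall_notLinearIndependent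
    hdep
  exact hf (a + h) (by rw [add_smul, ← ha, sub_add_cancel])

lemma exists_basis_toMatrix_eq_fromBlocks {n : ℕ} (hV : Module.finrank F V = n + 2)
    {f : Module.End F V} (hf : ∀ a : F, f ≠ a • 1) (h : F) :
    ∃ (b : Module.Basis (Unit ⊕ Fin (n + 1)) F V) (x : Matrix Unit (Fin (n + 1)) F)
      (D : Matrix (Fin (n + 1)) (Fin (n + 1)) F),
      LinearMap.toMatrix b b f = fromBlocks (h • 1) x (single 0 () 1) D := by
  obtain ⟨v, hv⟩ := exists_linearIndependent_pair_sub_smul hf h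
  have hpair : LinearIndepOn F (Sum.elim (fun _ => v) fun _ => f v - h • v)
      ({Sum.inl (), Sum.inr 0} : Set (Unit ⊕ Fin (n + 1))) := by
    rw [LinearIndepOn.pair_iff _ Sum.inl_ne_inr]
    exact LinearIndependent.pair_iff.1 hv
  have hcard : Module.finrank F V = Fintype.card (Unit ⊕ Fin (n + 1)) := by
    rw [hV, Fintype.card_sum, Fintype.card_unit, Fintype.card_fin]
    lia
  have : FiniteDimensional F V := Module.finite_of_finrank_pos (by lia)
  obtain ⟨b, hb⟩ := exists_basis_extension_of_card_eq hcard hpair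
  have hfv : f (b (Sum.inl ())) = h • b (Sum.inl ()) + b (Sum.inr 0) := by
    simp [hb (Sum.inl ()), hb (Sum.inr 0)]
  refine ⟨b, (LinearMap.toMatrix b b f).toBlocks₁₂, (LinearMap.toMatrix b b f).toBlocks₂₂, ?_⟩
  rw [← fromBlocks_toBlocks (LinearMap.toMatrix b b f)]
  congr 1
  · ext i j
    simp [toBlocks₁₁, LinearMap.toMatrix_apply, hfv]
  · ext i j
    simp [toBlocks₂₁, LinearMap.toMatrix_apply, hfv, Finsupp.single_apply, single_apply]

end Basis

section Sourour

variable {F ι κ : Type*} [Field F] [Fintype ι]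

lemma fromBlocks_smul_one_eq_mul {b c : F} (hb : b ≠ 0) (hc : c ≠ 0) (x : Matrix Unit ι F)
    (y : Matrix ι Unit F) {B C D : Matrix ι ι F} (h : D - (b * c)⁻¹ • (y * x) = B * C) :
    fromBlocks ((b * c) • (1 : Matrix Unit Unit F)) x y D =
      fromBlocks (b • 1) 0 (c⁻¹ • y) B * fromBlocks (c • 1) (b⁻¹ • x) 0 C := by
  rw [fromBlocks_multiply, ← h]
  congr 1 <;> simp [smul_smul, hb, hc, mul_comm]

variable [DecidableEq ι] [Fintype κ] [DecidableEq κ]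

lemma det_fromBlocks_smul_one {h : F} (hh : h ≠ 0) (x : Matrix Unit ι F) (y : Matrix ι Unit F)
    (D : Matrix ι ι F) :
    (fromBlocks (h • (1 : Matrix Unit Unit F)) x y D).det = h * (D - h⁻¹ • (y * x)).det := by
  have := fromBlocks_smul_one_eq_mul hh one_ne_zero x y (D := D) (mul_one _).symm
  rw [mul_one] at this
  rw [this, det_mul, det_fromBlocks_zero₁₂, det_fromBlocks_zero₂₁]
  simp

lemma isConj_fromBlocks_shear {R : Type*} [CommRing R] (h : R) (x : Matrix Unit ι R)
    (D : Matrix ι ι R) {y : Matrix ι Unit R} {r : Matrix Unit ι R} (hr : r * y = 0) :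
    IsConj (fromBlocks (h • (1 : Matrix Unit Unit R)) x y D)
      (fromBlocks (h • 1) (x + r * D - h • r) y (D - y * r)) := by
  refine ⟨⟨fromBlocks 1 r 0 1, fromBlocks 1 (-r) 0 1, ?_, ?_⟩, ?_⟩
  · simp [fromBlocks_multiply]
  · simp [fromBlocks_multiply]
  · simp [SemiconjBy, fromBlocks_multiply, hr]

lemma schurComplement_shear {h : F} (hh : h ≠ 0) (x : Matrix Unit ι F) (D : Matrix ι ι F)
    {y : Matrix ι Unit F} {r : Matrix Unit ι F} (hr : r * y = 0) :
    D - y * r - h⁻¹ • (y * (x + r * D - h • r)) =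
      (1 - h⁻¹ • (y * r)) * (D - h⁻¹ • (y * x)) := by
  have hyr : y * r * (y * x) = 0 := by rw [Matrix.mul_assoc, ← Matrix.mul_assoc r, hr]; simp
  simp only [Matrix.mul_sub, Matrix.mul_add, Matrix.sub_mul, Matrix.mul_smul, Matrix.smul_mul, hyr,
    smul_sub, smul_add, smul_smul, inv_mul_cancel₀ hh, Matrix.one_mul, Matrix.mul_assoc,
    one_smul, sub_sub_sub_cancel_right, smul_zero, sub_zero]
  abel

/-- `A` is the product of a matrix with characteristic polynomial `p` and one with characteristic
polynomial `q`; prescribing `p` and `q` encodes prescribing eigenvalues with multiplicities. -/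
def IsCharpolyProduct {R : Type*} [CommRing R] (A : Matrix ι ι R) (p q : R[X]) : Prop :=
  ∃ B C : Matrix ι ι R, A = B * C ∧ B.charpoly = p ∧ C.charpoly = q

namespace IsCharpolyProduct

section CommRing

variable {R : Type*} [CommRing R] {p q : R[X]}

lemma of_isConj {A A' : Matrix ι ι R} (hconj : IsConj A A')
    (h : IsCharpolyProduct A p q) : IsCharpolyProduct A' p q := by
  obtain ⟨P, hP⟩ := hconj
  obtain ⟨B, C, rfl, hB, hC⟩ := h
  refine ⟨P * B * (P : Matrix ι ι R)⁻¹, P * C * (P : Matrix ι ι R)⁻¹, ?_,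
    (charpoly_units_conj P B).trans hB, (charpoly_units_conj P C).trans hC⟩
  rw [← coe_units_inv, (Units.eq_mul_inv_iff_mul_eq P).2 hP.eq.symm]
  simp only [mul_assoc, Units.inv_mul_cancel_left]

lemma of_toMatrix (b : Module.Basis κ R (ι → R)) {A : Matrix ι ι R}
    (h : IsCharpolyProduct (LinearMap.toMatrix b b (toLin' A)) p q) : IsCharpolyProduct A p q := by
  obtain ⟨B, C, hA, hB, hC⟩ := h
  refine ⟨LinearMap.toMatrix' (toLin b b B), LinearMap.toMatrix' (toLin b b C), ?_, ?_, ?_⟩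
  · rw [← LinearMap.toMatrix'_comp, ← toLin_mul, ← hA, toLin_toMatrix, LinearMap.toMatrix'_toLin']
  · rw [← hB, ← charpoly_toLin B b, ← charpoly_toLin', toLin'_toMatrix']
  · rw [← hC, ← charpoly_toLin C b, ← charpoly_toLin', toLin'_toMatrix']

end CommRing

lemma fromBlocks {b c : F} (hb : b ≠ 0) (hc : c ≠ 0) {x : Matrix Unit ι F} {y : Matrix ι Unit F}
    {D : Matrix ι ι F} {p q : F[X]} (h : IsCharpolyProduct (D - (b * c)⁻¹ • (y * x)) p q) :
    IsCharpolyProduct (fromBlocks ((b * c) • (1 : Matrix Unit Unit F)) x y D) ((X - C b) * p)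
      ((X - C c) * q) := by
  have charpoly_smul_one (a : F) : (a • (1 : Matrix Unit Unit F)).charpoly = X - C a := by
    simp [charpoly, charmatrix]
  obtain ⟨B, C, hBC, rfl, rfl⟩ := h
  refine ⟨_, _, fromBlocks_smul_one_eq_mul hb hc x y hBC, ?_, ?_⟩
  · rw [charpoly_fromBlocks_zero₁₂, charpoly_smul_one]
  · rw [charpoly_fromBlocks_zero₂₁, charpoly_smul_one]

end IsCharpolyProduct

-- The shear by `r` changes a scalar Schur complement by a nonzero multiple of the off-diagonal
-- entry of `y * r`.
lemma exists_isConj_schurComplement_notMem_range_scalar {h : F} (hh : h ≠ 0) (x : Matrix Unit ι F)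
    {D : Matrix ι ι F} {y : Matrix ι Unit F} {r : Matrix Unit ι F} (hr : r * y = 0) {i j : ι}
    (hij : i ≠ j) (hyr : (y * r) i j ≠ 0)
    (hdet : (fromBlocks (h • (1 : Matrix Unit Unit F)) x y D).det ≠ 0) :
    ∃ (x' : Matrix Unit ι F) (D' : Matrix ι ι F),
      IsConj (fromBlocks (h • (1 : Matrix Unit Unit F)) x y D) (fromBlocks (h • 1) x' y D') ∧
      D' - h⁻¹ • (y * x') ∉ Set.range (scalar ι) := by
  by_cases hS : D - h⁻¹ • (y * x) ∈ Set.range (scalar ι)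
  · obtain ⟨s, hs⟩ := hS
    have hs₀ : s ≠ 0 := by
      rintro rfl
      have : Nonempty ι := ⟨i⟩
      rw [det_fromBlocks_smul_one hh, ← hs, map_zero, det_zero, mul_zero] at hdet
      exact hdet rfl
    refine ⟨_, _, isConj_fromBlocks_shear h x D hr, ?_⟩
    rw [schurComplement_shear hh x D hr, ← hs]
    rintro ⟨a, ha⟩
    have hentry := congrFun (congrFun ha i) j
    simp [hij, hs₀, hh, hyr] at hentry
  · exact ⟨x, D, IsConj.refl _, hS⟩

lemma exists_schurComplement_isCharpolyProduct {n : ℕ} {A : Matrix (Fin (n + 2)) (Fin (n + 2)) F}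
    (hA : A ∉ Set.range (scalar (Fin (n + 2)))) (hdet : A.det ≠ 0) {b c : F} (hb : b ≠ 0)
    (hc : c ≠ 0) :
    ∃ S : Matrix (Fin (n + 1)) (Fin (n + 1)) F,
      (2 ≤ n + 1 → S ∉ Set.range (scalar (Fin (n + 1)))) ∧ A.det = b * c * S.det ∧
      ∀ p q, IsCharpolyProduct S p q → IsCharpolyProduct A ((X - C b) * p) ((X - C c) * q) := by
  have hbc := mul_ne_zero hb hc
  have hf (a : F) : toLin' A ≠ a • 1 := fun h => hA ⟨a, by
    rw [← LinearMap.toMatrix'_algebraMap, ← LinearMap.toMatrix'_toLin' A, h]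
    rfl⟩
  obtain ⟨e, x, D, he⟩ := exists_basis_toMatrix_eq_fromBlocks (Module.finrank_fin_fun F) hf (b * c)
  let y : Matrix (Fin (n + 1)) Unit F := single 0 () 1
  have hdetM : (fromBlocks ((b * c) • 1) x y D).det = A.det := by
    rw [← he, LinearMap.det_toMatrix, LinearMap.det_toLin']
  obtain ⟨x', D', hconj, hS⟩ : ∃ (x' : Matrix Unit (Fin (n + 1)) F) (D' : Matrix _ _ F),
      IsConj (fromBlocks ((b * c) • 1) x y D) (fromBlocks ((b * c) • 1) x' y D') ∧
      (2 ≤ n + 1 → D' - (b * c)⁻¹ • (y * x') ∉ Set.range (scalar (Fin (n + 1)))) := by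
    rcases n with _ | n
    · exact ⟨x, D, IsConj.refl _, by lia⟩
    · obtain ⟨x', D', hconj, hS⟩ := exists_isConj_schurComplement_notMem_range_scalar hbc x
        (r := single () 1 1) (by simp [y]) zero_ne_one (by simp [y]) (hdetM ▸ hdet)
      exact ⟨x', D', hconj, fun _ => hS⟩
  refine ⟨_, hS, ?_, fun p q h => .of_toMatrix e ?_⟩
  · rw [← det_fromBlocks_smul_one hbc, ← det_eq_of_isConj hconj, hdetM]
  · exact he ▸ .of_isConj hconj.symm (.fromBlocks hb hc h)

theorem isCharpolyProduct_prod_X_sub_C {n : ℕ} {A : Matrix (Fin n) (Fin n) F}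
    (hA : 2 ≤ n → A ∉ Set.range (scalar (Fin n))) (hdet₀ : A.det ≠ 0) {β γ : Fin n → F}
    (hdet : A.det = (∏ i, β i) * ∏ i, γ i) :
    IsCharpolyProduct A (∏ i, (X - C (β i))) (∏ i, (X - C (γ i))) := by
  induction n using Nat.twoStepInduction with
  | zero => exact ⟨1, 1, Subsingleton.elim _ _, by simp, by simp⟩
  | one =>
    refine ⟨diagonal β, diagonal γ, ?_, charpoly_diagonal β, charpoly_diagonal γ⟩
    ext i j
    fin_cases i; fin_cases j
    simpa using hdet
  | more n _ ih =>
    rw [Fin.prod_univ_succ β, Fin.prod_univ_succ γ, mul_mul_mul_comm] at hdet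
    have hβγ : β 0 * γ 0 ≠ 0 := left_ne_zero_of_mul (hdet ▸ hdet₀)
    obtain ⟨S, hS, hdetS, hlift⟩ := exists_schurComplement_isCharpolyProduct (hA (by lia)) hdet₀
      (left_ne_zero_of_mul hβγ) (right_ne_zero_of_mul hβγ)
    rw [Fin.prod_univ_succ fun i => X - C (β i), Fin.prod_univ_succ fun i => X - C (γ i)]
    exact hlift _ _ (ih hS (right_ne_zero_of_mul (hdetS ▸ hdet₀))
      (mul_left_cancel₀ hβγ (hdetS.symm.trans hdet)))

end Sourour

section WordValues

variable {d : ℕ} {w : FreeGroup (Fin d)} {G H : Type*} [Group G] [Group H]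

lemma map_mem_wordValues (f : G →* H) {g : G} (hg : g ∈ wordValues w G) :
    f g ∈ wordValues w H := by
  obtain ⟨a, rfl⟩ := hg
  exact ⟨f ∘ a, (FreeGroup.lift_unique (f.comp (FreeGroup.lift a)) (by simp)).symm⟩

lemma prodMk_mem_wordValues {g : G} {h : H} (hg : g ∈ wordValues w G) (hh : h ∈ wordValues w H) :
    (g, h) ∈ wordValues w (G × H) := by
  obtain ⟨a, rfl⟩ := hg
  obtain ⟨b, rfl⟩ := hh
  exact ⟨fun i => (a i, b i),
    (FreeGroup.lift_unique ((FreeGroup.lift a).prod (FreeGroup.lift b)) (by simp)).symm⟩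

variable (w G) in
lemma one_mem_wordValues : (1 : G) ∈ wordValues w G :=
  ⟨1, (FreeGroup.lift_unique (1 : FreeGroup (Fin d) →* G) (by simp)).symm⟩

end WordValues

section SpecialLinearGroup

variable {R ι κ μ : Type*} [CommRing R] [Fintype ι] [DecidableEq ι] [Fintype κ] [DecidableEq κ]
  [Fintype μ] [DecidableEq μ]

/-- Conjugation by an invertible matrix, as an endomorphism of the special linear group. -/
def conjHom (P : (Matrix ι ι R)ˣ) :
    Matrix.SpecialLinearGroup ι R →* Matrix.SpecialLinearGroup ι R where
  toFun g := ⟨P * (g : Matrix ι ι R) * (↑P⁻¹ : Matrix ι ι R), by rw [det_units_conj, g.det_coe]⟩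
  map_one' := Subtype.ext <| by simp [-coe_units_inv]
  map_mul' g h := Subtype.ext <|
    calc P * (g * h : Matrix ι ι R) * (↑P⁻¹ : Matrix ι ι R)
      _ = P * g * (↑P⁻¹ : Matrix ι ι R) * (P * h * (↑P⁻¹ : Matrix ι ι R)) := by
        simp only [mul_assoc, Units.inv_mul_cancel_left]

/-- The block-diagonal embedding of `SL_ι × SL_κ` into `SL_μ` for an identification
`ι ⊕ κ ≃ μ` of the index types. -/
def blockDiagHom (e : ι ⊕ κ ≃ μ) :
    Matrix.SpecialLinearGroup ι R × Matrix.SpecialLinearGroup κ R →*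
      Matrix.SpecialLinearGroup μ R where
  toFun g := ⟨reindex e e (fromBlocks (g.1 : Matrix ι ι R) 0 0 (g.2 : Matrix κ κ R)), by
    rw [det_reindex_self, det_fromBlocks_zero₁₂, g.1.det_coe, g.2.det_coe, one_mul]⟩
  map_one' := Subtype.ext <| by simp
  map_mul' g h := Subtype.ext <|
    calc reindex e e (fromBlocks (g.1 * h.1 : Matrix ι ι R) 0 0 (g.2 * h.2 : Matrix κ κ R))
      _ = reindex e e (fromBlocks (g.1 : Matrix ι ι R) 0 0 g.2) *
          reindex e e (fromBlocks (h.1 : Matrix ι ι R) 0 0 h.2) := by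
        simp [submatrix_mul_equiv, fromBlocks_multiply]

lemma exists_mem_wordValues_coe_eq_of_isConj {d : ℕ} {w : FreeGroup (Fin d)}
    {g : Matrix.SpecialLinearGroup ι R} (hg : g ∈ wordValues w (Matrix.SpecialLinearGroup ι R))
    {B : Matrix ι ι R} (hB : IsConj (g : Matrix ι ι R) B) :
    ∃ b ∈ wordValues w (Matrix.SpecialLinearGroup ι R), (b : Matrix ι ι R) = B := by
  obtain ⟨P, hP⟩ := hB
  exact ⟨conjHom P g, map_mem_wordValues _ hg, ((Units.eq_mul_inv_iff_mul_eq P).2 hP.eq.symm).symm⟩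

end SpecialLinearGroup

section SplitCharpoly

variable {R ι : Type*} [CommRing R] [Fintype ι] [DecidableEq ι] {A : Matrix ι ι R} {β : ι → R}

lemma isRoot_charpoly_of_eq_prod (hA : A.charpoly = ∏ i, (X - C (β i))) (i : ι) :
    A.charpoly.IsRoot (β i) := by
  rw [hA, IsRoot.def, eval_prod]
  exact Finset.prod_eq_zero (Finset.mem_univ i) (by simp)

lemma det_eq_prod_of_charpoly_eq_prod (hA : A.charpoly = ∏ i, (X - C (β i))) :
    A.det = ∏ i, β i := by
  rw [det_eq_sign_charpoly_coeff, hA, coeff_zero_eq_eval_zero, eval_prod]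
  simp [Finset.prod_neg, ← mul_assoc, ← mul_pow]

end SplitCharpoly

section SimpleSplitCharpoly

variable {F ι : Type*} [Field F] [Fintype ι] [DecidableEq ι] {β : ι → F}

lemma isConj_diagonal_of_charpoly_eq_prod (hβ : Function.Injective β) {A : Matrix ι ι F}
    (hA : A.charpoly = ∏ i, (X - C (β i))) : IsConj (diagonal β) A := by
  have hev (i : ι) : Module.End.HasEigenvalue (toLin' A) (β i) := by
    rw [Module.End.hasEigenvalue_iff_isRoot_charpoly, charpoly_toLin']
    exact isRoot_charpoly_of_eq_prod hA i
  choose v hv using fun i => (hev i).exists_hasEigenvector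
  obtain ⟨P, hP⟩ : IsUnit (of v)ᵀ := by
    rw [← linearIndependent_cols_iff_isUnit]
    exact Module.End.eigenvectors_linearIndependent' (toLin' A) β hβ v hv
  refine ⟨P, ?_⟩
  rw [SemiconjBy, hP]
  ext i j
  rw [mul_diagonal, mul_comm]
  exact (congrFun (hv j).apply_eq_smul i).symm

lemma isConj_of_charpoly_eq_prod (hβ : Function.Injective β) {A B : Matrix ι ι F}
    (hA : A.charpoly = ∏ i, (X - C (β i))) (hB : B.charpoly = ∏ i, (X - C (β i))) : IsConj A B :=
  (isConj_diagonal_of_charpoly_eq_prod hβ hA).symm.trans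
    (isConj_diagonal_of_charpoly_eq_prod hβ hB)

lemma notMem_center_of_charpoly_eq_prod [Nontrivial ι] (hβ : Function.Injective β)
    {g : Matrix.SpecialLinearGroup ι F}
    (hg : (g : Matrix ι ι F).charpoly = ∏ i, (X - C (β i))) :
    g ∉ Subgroup.center (Matrix.SpecialLinearGroup ι F) := by
  rw [Matrix.SpecialLinearGroup.mem_center_iff]
  rintro ⟨r, -, hr⟩
  have hβr (i : ι) : β i = r := by
    have hroot := isRoot_charpoly_of_eq_prod hg i
    rw [← hr, scalar_apply, charpoly_diagonal] at hroot
    simpa [sub_eq_zero, IsRoot.def, Finset.prod_eq_zero_iff] using hroot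
  obtain ⟨i, j, hij⟩ := exists_pair_ne ι
  exact hij (hβ ((hβr i).trans (hβr j).symm))

end SimpleSplitCharpoly

section WordValueSpectrum

variable {F : Type*} [Field F] {d : ℕ} {w : FreeGroup (Fin d)}

/-- The family `β`, with multiplicities, is the family of eigenvalues of some `w`-value in
`SL_ι(F)`. -/
def IsWordValueSpectrum {ι : Type*} [Fintype ι] [DecidableEq ι] (w : FreeGroup (Fin d))
    (β : ι → F) : Prop :=
  ∃ g ∈ wordValues w (Matrix.SpecialLinearGroup ι F),
    (g : Matrix ι ι F).charpoly = ∏ i, (X - C (β i))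

variable (w) in
lemma isWordValueSpectrum_one {ι : Type*} [Fintype ι] [DecidableEq ι] :
    IsWordValueSpectrum w (1 : ι → F) :=
  ⟨1, one_mem_wordValues w _, by simp [charpoly_one]⟩

lemma IsWordValueSpectrum.sumElim {ι κ μ : Type*} [Fintype ι] [DecidableEq ι] [Fintype κ]
    [DecidableEq κ] [Fintype μ] [DecidableEq μ] {β : ι → F} {γ : κ → F}
    (hβ : IsWordValueSpectrum w β) (hγ : IsWordValueSpectrum w γ) (e : ι ⊕ κ ≃ μ) :
    IsWordValueSpectrum w (Sum.elim β γ ∘ e.symm) := by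
  obtain ⟨g, hg, hgβ⟩ := hβ
  obtain ⟨h, hh, hhγ⟩ := hγ
  refine ⟨blockDiagHom e (g, h), map_mem_wordValues _ (prodMk_mem_wordValues hg hh), ?_⟩
  refine (charpoly_reindex e _).trans ?_
  rw [charpoly_fromBlocks_zero₁₂, hgβ, hhγ, ← e.prod_comp, Fintype.prod_sum_type]
  simp

lemma IsWordValueSpectrum.exists_mem_wordValues_coe_eq {ι : Type*} [Fintype ι] [DecidableEq ι]
    {β : ι → F} (hw : IsWordValueSpectrum w β) (hβ : Function.Injective β) {B : Matrix ι ι F}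
    (hB : B.charpoly = ∏ i, (X - C (β i))) :
    ∃ b ∈ wordValues w (Matrix.SpecialLinearGroup ι F), (b : Matrix ι ι F) = B := by
  obtain ⟨g, hg, hgβ⟩ := hw
  exact exists_mem_wordValues_coe_eq_of_isConj hg (isConj_of_charpoly_eq_prod hβ hgβ hB)

lemma IsWordValueSpectrum.prod_eq_one {ι : Type*} [Fintype ι] [DecidableEq ι] {β : ι → F}
    (hw : IsWordValueSpectrum w β) : ∏ i, β i = 1 := by
  obtain ⟨g, -, hgβ⟩ := hw
  rw [← g.det_coe, det_eq_prod_of_charpoly_eq_prod hgβ]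

variable {K : Type*} [NontriviallyNormedField K] [CompleteSpace K] (φ : K →+* F)

include φ

lemma exists_isWordValueSpectrum_fin_two (hw : w ≠ 1) {Z : Set F} (hZ : Z.Finite) :
    ∃ β : Fin 2 → F, Function.Injective β ∧ (∀ i, β i ∉ Z) ∧ IsWordValueSpectrum w β := by
  let Y : Set K := φ ⁻¹' Z ∪ {1, -1}
  have hY : Y.Finite := (hZ.preimage φ.injective.injOn).union (Set.toFinite _)
  have htrace : ∀ᶠ τ in cobounded K, τ ∉ (fun z => z + z⁻¹) '' Y :=
    isBounded_def.1 (hY.image _).isBounded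
  obtain ⟨τ, ⟨g, hg, hgτ⟩, ⟨u, hu⟩, hτ⟩ :=
    ((frequently_cobounded_trace_wordValues hw).and_eventually
      (eventually_cobounded_exists_units_add_inv_eq.and htrace)).exists
  rw [Units.val_inv_eq_inv_val] at hu
  have huY : (u : K) ∉ Y := fun h => hτ ⟨_, h, hu⟩
  have huY' : (u : K)⁻¹ ∉ Y := fun h => hτ ⟨_, h, by simpa [add_comm] using hu⟩
  have hne : (u : K) ≠ (u : K)⁻¹ := by
    rw [Ne, ← mul_eq_one_iff_eq_inv₀ u.ne_zero, ← sq, sq_eq_one_iff]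
    exact fun h => huY (.inr h)
  have hchar : (g : Matrix (Fin 2) (Fin 2) K).charpoly = (X - C (u : K)) * (X - C (u : K)⁻¹) := by
    rw [charpoly_fin_two, g.det_coe, hgτ, ← hu, ← mul_inv_cancel₀ u.ne_zero]
    simp only [C_add, C_mul]
    ring
  refine ⟨φ ∘ ![(u : K), (u : K)⁻¹], φ.injective.comp ?_, ?_,
    Matrix.SpecialLinearGroup.map φ g, map_mem_wordValues _ hg, ?_⟩
  · simpa [Function.Injective, Fin.forall_fin_two] using ⟨hne, hne.symm⟩
  · rw [Fin.forall_fin_two]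
    exact ⟨fun h => huY (.inl h), fun h => huY' (.inl h)⟩
  · refine (charpoly_map _ φ).trans ?_
    rw [hchar]
    simp

lemma exists_injective_isWordValueSpectrum (hw : w ≠ 1) (n : ℕ) :
    ∃ β : Fin n → F, Function.Injective β ∧ IsWordValueSpectrum w β := by
  induction n using Nat.twoStepInduction with
  | zero => exact ⟨1, Function.injective_of_subsingleton _, isWordValueSpectrum_one w⟩
  | one => exact ⟨1, Function.injective_of_subsingleton _, isWordValueSpectrum_one w⟩
  | more n ih _ =>
    obtain ⟨β, hβ, hwβ⟩ := ih
    obtain ⟨γ, hγ, hγβ, hwγ⟩ := exists_isWordValueSpectrum_fin_two φ hw (Set.finite_range β)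
    refine ⟨_, ?_, hwβ.sumElim hwγ finSumFinEquiv⟩
    exact (hβ.sumElim hγ fun i j h => hγβ j ⟨i, h⟩).comp finSumFinEquiv.symm.injective

end WordValueSpectrum

section Conclusion

variable {K F : Type*} [NontriviallyNormedField K] [CompleteSpace K] [Field F] (φ : K →+* F)
  {n d₁ d₂ : ℕ} {w₁ : FreeGroup (Fin d₁)} {w₂ : FreeGroup (Fin d₂)}

include φ

lemma exists_mem_wordValues_notMem_center {d : ℕ} {w : FreeGroup (Fin d)} (hw : w ≠ 1)
    (hn : 2 ≤ n) :
    ∃ g ∈ wordValues w (Matrix.SpecialLinearGroup (Fin n) F),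
      g ∉ Subgroup.center (Matrix.SpecialLinearGroup (Fin n) F) := by
  obtain ⟨β, hβ, g, hg, hgβ⟩ := exists_injective_isWordValueSpectrum φ hw n
  have := Fin.nontrivial_iff_two_le.2 hn
  exact ⟨g, hg, notMem_center_of_charpoly_eq_prod hβ hgβ⟩

lemma exists_eq_mul_of_notMem_center (hw₁ : w₁ ≠ 1) (hw₂ : w₂ ≠ 1)
    {g : Matrix.SpecialLinearGroup (Fin n) F}
    (hg : 2 ≤ n → g ∉ Subgroup.center (Matrix.SpecialLinearGroup (Fin n) F)) :
    ∃ g₁ ∈ wordValues w₁ (Matrix.SpecialLinearGroup (Fin n) F),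
      ∃ g₂ ∈ wordValues w₂ (Matrix.SpecialLinearGroup (Fin n) F), g = g₁ * g₂ := by
  obtain ⟨β, hβ, hwβ⟩ := exists_injective_isWordValueSpectrum φ hw₁ n
  obtain ⟨γ, hγ, hwγ⟩ := exists_injective_isWordValueSpectrum φ hw₂ n
  have hscalar (hn : 2 ≤ n) : (g : Matrix (Fin n) (Fin n) F) ∉ Set.range (scalar (Fin n)) := by
    rintro ⟨r, hr⟩
    refine hg hn (Matrix.SpecialLinearGroup.mem_center_iff.2 ⟨r, ?_, hr⟩)
    rw [← g.det_coe, ← hr, scalar_apply, det_diagonal, Finset.prod_const, Finset.card_univ]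
  obtain ⟨B, D, hBD, hB, hD⟩ := isCharpolyProduct_prod_X_sub_C (β := β) (γ := γ) hscalar
    (by rw [g.det_coe]; exact one_ne_zero) (by rw [g.det_coe, hwβ.prod_eq_one, hwγ.prod_eq_one,
      one_mul])
  obtain ⟨g₁, hg₁, rfl⟩ := hwβ.exists_mem_wordValues_coe_eq hβ hB
  obtain ⟨g₂, hg₂, rfl⟩ := hwγ.exists_mem_wordValues_coe_eq hγ hD
  exact ⟨g₁, hg₁, g₂, hg₂, Subtype.ext hBD⟩

end Conclusion

end SLWaring

open SLWaring in
theorem sl_waring_three_general {K F : Type*} [NontriviallyNormedField K] [CompleteSpace K]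
    [Field F] (φ : K →+* F) (n : ℕ) {d₁ d₂ d₃ : ℕ} (w₁ : FreeGroup (Fin d₁))
    (w₂ : FreeGroup (Fin d₂)) (w₃ : FreeGroup (Fin d₃)) (hw₁ : w₁ ≠ 1) (hw₂ : w₂ ≠ 1)
    (hw₃ : w₃ ≠ 1) (g : Matrix.SpecialLinearGroup (Fin n) F) :
    ∃ g₁ ∈ wordValues w₁ (Matrix.SpecialLinearGroup (Fin n) F),
      ∃ g₂ ∈ wordValues w₂ (Matrix.SpecialLinearGroup (Fin n) F),
        ∃ g₃ ∈ wordValues w₃ (Matrix.SpecialLinearGroup (Fin n) F), g = g₁ * g₂ * g₃ := by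
  by_cases hg : 2 ≤ n ∧ g ∈ Subgroup.center (Matrix.SpecialLinearGroup (Fin n) F)
  · obtain ⟨g₃, hg₃, hg₃c⟩ := exists_mem_wordValues_notMem_center φ hw₃ hg.1
    have hgg₃ : g * g₃⁻¹ ∉ Subgroup.center (Matrix.SpecialLinearGroup (Fin n) F) := by
      rwa [Subgroup.mul_mem_cancel_left _ hg.2, inv_mem_iff]
    obtain ⟨g₁, hg₁, g₂, hg₂, h⟩ := exists_eq_mul_of_notMem_center φ hw₁ hw₂ fun _ => hgg₃
    exact ⟨g₁, hg₁, g₂, hg₂, g₃, hg₃, mul_inv_eq_iff_eq_mul.1 h⟩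
  · obtain ⟨g₁, hg₁, g₂, hg₂, h⟩ := exists_eq_mul_of_notMem_center φ hw₁ hw₂ (not_and.1 hg)
    exact ⟨g₁, hg₁, g₂, hg₂, 1, one_mem_wordValues w₃ _, by rw [mul_one, h]⟩

/-- If `F` admits a ring homomorphism from `ℝ` or from some `ℚ_p`, `n ≥ 2`, and `w₁, w₂, w₃` are
nontrivial words, then `SL_n(F) = w₁(SL_n(F)) · w₂(SL_n(F)) · w₃(SL_n(F))`. -/
theorem sl_waring_three {F : Type*} [Field F]
    (hF : Nonempty (ℝ →+* F) ∨ ∃ (p : ℕ) (hp : Fact p.Prime), Nonempty (@Padic p hp →+* F))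
    (n : ℕ) (hn : 2 ≤ n) {d₁ d₂ d₃ : ℕ}
    (w₁ : FreeGroup (Fin d₁)) (w₂ : FreeGroup (Fin d₂)) (w₃ : FreeGroup (Fin d₃))
    (hw₁ : w₁ ≠ 1) (hw₂ : w₂ ≠ 1) (hw₃ : w₃ ≠ 1) :
    ∀ g : Matrix.SpecialLinearGroup (Fin n) F,
      ∃ g₁ ∈ wordValues w₁ (Matrix.SpecialLinearGroup (Fin n) F),
        ∃ g₂ ∈ wordValues w₂ (Matrix.SpecialLinearGroup (Fin n) F),
          ∃ g₃ ∈ wordValues w₃ (Matrix.SpecialLinearGroup (Fin n) F), g = g₁ * g₂ * g₃ := by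
  obtain ⟨⟨φ⟩⟩ | ⟨p, hp, ⟨φ⟩⟩ := hF <;>
    exact sl_waring_three_general φ n w₁ w₂ w₃ hw₁ hw₂ hw₃
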